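/- Let P be a d-dimensional isotropic simplicial polytope that is a local extremum (with respect to the Hausdorff metric on the space of d-dimensional convex bodies) of K ↦ L_K. Fix a facet F of P with vertices v_1, …, v_d, a vertex v_{j′} of F, and let Z be the affine hull of { v_j : j ≠ j′ }. Introduce cylindrical coordinates (ρ, θ, z) with origin an arbitrary point of Z ∩ P, where ρ ∈ [0,∞) and θ ∈ [−π, π) are polar coordinates in the 2-dimensional plane orthogonal to Z, oriented so that points of F have θ = 0 and all of P has θ ∈ (−π, 0]. Let D be the probability distribution supported on F with density proportional to ρ(x). Then E_{X ∼ D}[‖X‖²] = d + 2. -/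

import Mathlib

open MeasureTheory Finset
open scoped ProbabilityTheory
open scoped RealInnerProductSpace

noncomputable section

abbrev Euc (d : ℕ) := EuclideanSpace ℝ (Fin d)

section GeneralSpace

variable {V : Type*} [NormedAddCommGroup V] [NormedSpace ℝ V]

/-- The dimension of a set: the rank of the direction of its affine span. -/
noncomputable def sdim (F : Set V) : ℕ := Module.finrank ℝ (affineSpan ℝ F).direction

/-- `F` is a simplex with `n` vertices (an `(n-1)`-dimensional simplex). -/
def IsSimplexWith (n : ℕ) (F : Set V) : Prop :=
  ∃ w : Fin n → V, AffineIndependent ℝ w ∧ F = convexHull ℝ (Set.range w)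

/-- A polytope is the convex hull of finitely many points. -/
def IsPolytope (P : Set V) : Prop := ∃ S : Finset V, P = convexHull ℝ (S : Set V)

/-- A facet of a `d`-dimensional polytope: an exposed face of dimension `d - 1`. -/
def IsFacetOf (d : ℕ) (P F : Set V) : Prop := IsExposed ℝ P F ∧ sdim F = d - 1

/-- A `d`-dimensional simplicial polytope: a polytope of dimension `d`, each facet of which
is a `(d-1)`-dimensional simplex (i.e. has `d` affinely independent vertices). -/
def IsSimplicialPolytope (d : ℕ) (P : Set V) : Prop :=
  IsPolytope P ∧ sdim P = d ∧ ∀ F : Set V, IsFacetOf d P F → IsSimplexWith d F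

end GeneralSpace

/-- A convex body: compact, convex, with nonempty interior. -/
def IsConvexBody {d : ℕ} (K : Set (Euc d)) : Prop :=
  IsCompact K ∧ Convex ℝ K ∧ (interior K).Nonempty

/-- The barycenter `μ_K` of the uniform distribution on `K`. -/
noncomputable def centroid {d : ℕ} (K : Set (Euc d)) : Euc d :=
  (volume K).toReal⁻¹ • ∫ x in K, x

/-- The covariance matrix `A(K)` of the uniform distribution on `K`. -/
noncomputable def covMatrix {d : ℕ} (K : Set (Euc d)) : Matrix (Fin d) (Fin d) ℝ :=
  Matrix.of fun i j =>
    (volume K).toReal⁻¹ * ∫ x in K, (x i - centroid K i) * (x j - centroid K j)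

/-- The isotropic constant `L_K`, defined by `L_K ^ (2d) = det A(K) / vol(K) ^ 2`. -/
noncomputable def isoConst {d : ℕ} (K : Set (Euc d)) : ℝ :=
  ((covMatrix K).det / (volume K).toReal ^ 2) ^ ((2 * (d : ℝ))⁻¹)

/-- `K` is isotropic: its barycenter is the origin and its covariance matrix is the identity. -/
def IsIsotropic {d : ℕ} (K : Set (Euc d)) : Prop :=
  centroid K = 0 ∧ covMatrix K = 1

/-- `P` is a local extremum (local maximum or local minimum) of `K ↦ L_K` among convex bodies,
with respect to the Hausdorff metric. -/
def IsLocalExtremumOfIsoConst {d : ℕ} (P : Set (Euc d)) : Prop :=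
  (∃ ε > 0, ∀ K : Set (Euc d), IsConvexBody K →
      Metric.hausdorffDist K P < ε → isoConst K ≤ isoConst P) ∨
  (∃ ε > 0, ∀ K : Set (Euc d), IsConvexBody K →
      Metric.hausdorffDist K P < ε → isoConst P ≤ isoConst K)

/-- The polar angle of `(a, b) ∈ ℝ²`, normalized to lie in `[-π, π)`. -/
noncomputable def polarAngle (a b : ℝ) : ℝ :=
  if Complex.arg ⟨a, b⟩ = Real.pi then -Real.pi else Complex.arg ⟨a, b⟩

section HyperplaneSlices

open scoped Topology

variable {E : Type*} [NormedAddCommGroup E] [InnerProductSpace ℝ E]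

/-- The decomposition of a space into the hyperplane orthogonal to a unit vector `w` and the
line spanned by `w`. -/
def orthogonalProdLineEquiv (w : E) (hw : ‖w‖ = 1) : ((ℝ ∙ w)ᗮ × ℝ) ≃ₗ[ℝ] E where
  toFun p := (p.1 : E) + p.2 • w
  map_add' p q := by
    simp only [Prod.fst_add, Prod.snd_add, Submodule.coe_add, add_smul]
    abel
  map_smul' a p := by
    simp [smul_smul]
  invFun x := (⟨x - ⟪w, x⟫ • w, by
    rw [Submodule.mem_orthogonal_singleton_iff_inner_right, inner_sub_right, inner_smul_right,
      real_inner_self_eq_norm_sq, hw]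
    ring⟩, ⟪w, x⟫)
  left_inv p := by
    have h : ⟪w, (p.1 : E)⟫ = 0 :=
      Submodule.mem_orthogonal_singleton_iff_inner_right.1 p.1.2
    have h' : ⟪w, (p.1 : E) + p.2 • w⟫ = p.2 := by
      rw [inner_add_right, h, inner_smul_right, real_inner_self_eq_norm_sq, hw]
      ring
    ext
    · simp [h']
    · exact h'
  right_inv x := by simp

variable [FiniteDimensional ℝ E] [MeasurableSpace E] [BorelSpace E]

/-- Lebesgue measure is, up to a positive factor, the product of a Haar measure on a hyperplane
with Lebesgue measure on a transversal line. -/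
lemma exists_integral_eq_integral_slices (o w : E) (hw : ‖w‖ = 1)
    (ν : Measure (ℝ ∙ w)ᗮ) [ν.IsAddHaarMeasure] :
    ∃ c : ℝ, 0 < c ∧ ∀ h : E → ℝ, Integrable h →
      Integrable (fun y : (ℝ ∙ w)ᗮ => ∫ s : ℝ, h (o + y + s • w)) ν ∧
      ∫ x, h x = c * ∫ y : (ℝ ∙ w)ᗮ, (∫ s : ℝ, h (o + y + s • w)) ∂ν := by
  set L := (orthogonalProdLineEquiv w hw).toContinuousLinearEquiv with hL
  have hLapp (p : (ℝ ∙ w)ᗮ × ℝ) : L p = (p.1 : E) + p.2 • w := rfl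
  set m : Measure E := (ν.prod volume).map L with hm
  have hmH : m.IsAddHaarMeasure := L.isAddHaarMeasure_map _
  set c := Measure.addHaarScalarFactor (volume : Measure E) m with hc
  have hvol : (volume : Measure E) = c • m := Measure.isAddLeftInvariant_eq_smul _ _
  have hcpos : 0 < c := Measure.addHaarScalarFactor_pos_of_isAddHaarMeasure _ _
  refine ⟨c, hcpos, fun h hh => ?_⟩
  have hh' : Integrable (fun x => h (o + x)) := hh.comp_add_left o
  have hInt : Integrable (fun x => h (o + x)) m := by
    rw [hvol] at hh'
    exact (integrable_smul_measure (ENNReal.coe_ne_zero.2 hcpos.ne') ENNReal.coe_ne_top).1 hh'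
  have hemb : MeasurableEmbedding L := L.toHomeomorph.measurableEmbedding
  have hprod : Integrable (fun p : (ℝ ∙ w)ᗮ × ℝ => h (o + p.1 + p.2 • w)) (ν.prod volume) := by
    have := hemb.integrable_map_iff.1 hInt
    refine this.congr (Filter.Eventually.of_forall fun p => ?_)
    simp [hLapp, add_assoc]
  refine ⟨hprod.integral_prod_left, ?_⟩
  rw [← integral_add_left_eq_self h o, hvol, integral_smul_nnreal_measure, hm,
    hemb.integral_map, ← integral_prod _ hprod]
  simp only [hLapp, add_assoc]
  rfl


/-- Almost every point of a hyperplane meeting the interior of a closed convex set is not on the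
frontier of that set. -/
lemma Convex.ae_notMem_frontier_slice {Q : Set E} (hconv : Convex ℝ Q) (hclosed : IsClosed Q)
    {o w : E} {p : E} (hp : p ∈ interior Q) (hpw : ⟪p - o, w⟫ = 0)
    (ν : Measure (ℝ ∙ w)ᗮ) [ν.IsAddHaarMeasure] :
    ∀ᵐ y : (ℝ ∙ w)ᗮ ∂ν, o + (y : E) ∉ frontier Q := by
  set S : Set (ℝ ∙ w)ᗮ := {y | o + (y : E) ∈ Q} with hS
  have hSconv : Convex ℝ S := by
    intro x hx y hy a b ha hb hab
    have := hconv hx hy ha hb hab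
    rw [hS, Set.mem_ofPred_eq]
    convert this using 1
    rw [smul_add, smul_add, add_add_add_comm, ← add_smul, hab, one_smul]
    rfl
  have hSclosed : IsClosed S := hclosed.preimage (by fun_prop)
  have hnull : ν (frontier S) = 0 := hSconv.addHaar_frontier ν
  set p' : (ℝ ∙ w)ᗮ := ⟨p - o, by
    rw [Submodule.mem_orthogonal_singleton_iff_inner_left]; exact hpw⟩ with hp'
  filter_upwards [measure_eq_zero_iff_ae_notMem.1 hnull] with y hy hyQ
  rw [hSclosed.frontier_eq] at hy
  rw [hclosed.frontier_eq] at hyQ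
  refine hyQ.2 ?_
  have hyS : y ∈ interior S := by
    by_contra hcon
    exact hy ⟨hyQ.1, hcon⟩
  -- push `y` slightly away from `p'` inside the slice
  have hcont : Filter.Tendsto (fun ε : ℝ => y + ε • (y - p')) (𝓝[>] 0) (𝓝 y) := by
    have : Continuous fun ε : ℝ => y + ε • (y - p') := by fun_prop
    have h0 := this.tendsto 0
    simp only [zero_smul, add_zero] at h0
    exact h0.mono_left nhdsWithin_le_nhds
  obtain ⟨ε, hεS, hε⟩ := ((hcont.eventually (mem_interior_iff_mem_nhds.1 hyS)).and
    self_mem_nhdsWithin).exists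
  have hε : 0 < ε := hε
  refine hconv.openSegment_interior_self_subset_interior hp hεS
    ⟨ε / (1 + ε), 1 / (1 + ε), by positivity, by positivity, by field_simp; ring, ?_⟩
  have h1 : (1 + ε) ≠ 0 := by positivity
  have : ((y + ε • (y - p') : (ℝ ∙ w)ᗮ) : E) = (y : E) + ε • ((y : E) - (p - o)) := rfl
  rw [this]
  match_scalars <;> field_simp
  ring

/-- First variation of an integral over a convex body cut by a rotating hyperplane. -/
lemma hasDerivAt_integral_inter_halfspace (o u w : E) (hw : ‖w‖ = 1) (huw : ⟪u, w⟫ = 0)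
    (ν : Measure (ℝ ∙ w)ᗮ) [ν.IsAddHaarMeasure] :
    ∃ c : ℝ, 0 < c ∧ ∀ Q : Set E, IsCompact Q → Convex ℝ Q →
      (∃ p ∈ interior Q, ⟪p - o, w⟫ = 0) → ∀ f : E → ℝ, Continuous f →
      HasDerivAt (fun t : ℝ => ∫ x in {x ∈ Q | ⟪x - o, w⟫ ≤ t * ⟪x - o, u⟫}, f x)
        (c * ∫ y in {y : (ℝ ∙ w)ᗮ | o + (y : E) ∈ Q}, f (o + y) * ⟪(y : E), u⟫ ∂ν) 0 := by
  obtain ⟨c, hc, hslice⟩ := exists_integral_eq_integral_slices o w hw ν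
  refine ⟨c, hc, fun Q hQ hconv ⟨p, hp, hpw⟩ f hf => ?_⟩
  have hwy (y : (ℝ ∙ w)ᗮ) : ⟪(y : E), w⟫ = 0 :=
    Submodule.mem_orthogonal_singleton_iff_inner_left.1 y.2
  have hcoordw (y : (ℝ ∙ w)ᗮ) (s : ℝ) : ⟪o + y + s • w - o, w⟫ = s := by
    rw [add_assoc, add_sub_cancel_left, inner_add_left, hwy, real_inner_smul_left,
      real_inner_self_eq_norm_sq, hw]
    ring
  have hcoordu (y : (ℝ ∙ w)ᗮ) (s : ℝ) : ⟪o + y + s • w - o, u⟫ = ⟪(y : E), u⟫ := by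
    rw [add_assoc, add_sub_cancel_left, inner_add_left, real_inner_smul_left,
      real_inner_comm u w, huw]
    ring
  obtain ⟨R, hR⟩ := hQ.isBounded.subset_closedBall o
  have hnorm (y : (ℝ ∙ w)ᗮ) (s : ℝ) : ‖(y : E)‖ ^ 2 + s ^ 2 = ‖o + y + s • w - o‖ ^ 2 := by
    rw [add_assoc, add_sub_cancel_left, norm_add_sq_real, real_inner_smul_right, hwy, norm_smul,
      hw, Real.norm_eq_abs, mul_one, sq_abs]
    ring
  have hbound (y : (ℝ ∙ w)ᗮ) (s : ℝ) (h : o + y + s • w ∈ Q) : ‖(y : E)‖ ≤ R ∧ |s| ≤ R := by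
    have h1 := hR h
    rw [mem_closedBall_iff_norm] at h1
    have h2 := hnorm y s
    have h3 : ‖o + y + s • w - o‖ ^ 2 ≤ R ^ 2 := by gcongr
    have hR0 : 0 ≤ R := (norm_nonneg _).trans h1
    exact ⟨abs_le_of_sq_le_sq' (by nlinarith [sq_nonneg s]) hR0 |>.2,
      abs_le_of_sq_le_sq (by nlinarith [sq_nonneg ‖(y : E)‖]) hR0⟩
  obtain ⟨M, hM⟩ := hQ.exists_bound_of_continuousOn hf.continuousOn
  have hM0 : 0 ≤ M := (norm_nonneg _).trans (hM p (interior_subset hp))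
  set g : E → ℝ := Q.indicator f with hg
  have hgmeas : Measurable g := hf.measurable.indicator hQ.measurableSet
  have hgM (x : E) : ‖g x‖ ≤ M := by
    by_cases hx : x ∈ Q
    · simpa [hg, hx] using hM x hx
    · simpa [hg, hx] using hM0
  have hlinemeas (y : (ℝ ∙ w)ᗮ) : Measurable fun s : ℝ => g (o + y + s • w) :=
    hgmeas.comp (by fun_prop)
  have hline (y : (ℝ ∙ w)ᗮ) : Integrable fun s : ℝ => g (o + y + s • w) := by
    have hI : Integrable ((Set.Icc (-R) R).indicator fun _ : ℝ => M) :=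
      (integrable_indicator_iff measurableSet_Icc).2 (by simp)
    refine hI.mono' (hlinemeas y).aestronglyMeasurable (Filter.Eventually.of_forall fun s => ?_)
    by_cases hs : o + y + s • w ∈ Q
    · have := abs_le.1 (hbound y s hs).2
      rw [Set.indicator_of_mem (Set.mem_Icc.2 this)]
      exact hgM _
    · simp only [hg, Set.indicator_of_notMem hs, norm_zero]
      exact Set.indicator_nonneg (fun _ _ => hM0) _
  have hKmeas (t : ℝ) : MeasurableSet {x ∈ Q | ⟪x - o, w⟫ ≤ t * ⟪x - o, u⟫} :=
    hQ.measurableSet.inter (measurableSet_le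
      (by fun_prop : Measurable fun x : E => ⟪x - o, w⟫)
      (by fun_prop : Measurable fun x : E => t * ⟪x - o, u⟫))
  set G : ℝ → (ℝ ∙ w)ᗮ → ℝ := fun t y => ∫ s in Set.Iic (t * ⟪(y : E), u⟫), g (o + y + s • w)
    with hG
  have hGslice (t : ℝ) (y : (ℝ ∙ w)ᗮ) :
      ∫ s : ℝ, {x ∈ Q | ⟪x - o, w⟫ ≤ t * ⟪x - o, u⟫}.indicator f (o + y + s • w) = G t y := by
    rw [hG]
    simp only
    rw [← integral_indicator measurableSet_Iic]
    refine integral_congr_ae (Filter.Eventually.of_forall fun s => ?_)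
    by_cases hsQ : o + y + s • w ∈ Q <;> by_cases hst : s ≤ t * ⟪(y : E), u⟫ <;>
      simp [Set.indicator, hcoordw, hcoordu, hg, hsQ, hst]
  have hKint (t : ℝ) : Integrable ({x ∈ Q | ⟪x - o, w⟫ ≤ t * ⟪x - o, u⟫}.indicator f) :=
    (integrable_indicator_iff (hKmeas t)).2
      ((hf.continuousOn.integrableOn_compact hQ).mono_set fun x hx => hx.1)
  have hGint (t : ℝ) : Integrable (G t) ν := by
    have := (hslice _ (hKint t)).1
    simpa only [hGslice] using this
  have hInt (t : ℝ) : ∫ x in {x ∈ Q | ⟪x - o, w⟫ ≤ t * ⟪x - o, u⟫}, f x = c * ∫ y, G t y ∂ν := by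
    rw [← integral_indicator (hKmeas t), (hslice _ (hKint t)).2]
    simp only [hGslice]
  have hGsub (t t' : ℝ) (y : (ℝ ∙ w)ᗮ) : G t y - G t' y =
      ∫ s in (t' * ⟪(y : E), u⟫)..(t * ⟪(y : E), u⟫), g (o + y + s • w) :=
    intervalIntegral.integral_Iic_sub_Iic (hline y).integrableOn (hline y).integrableOn
  have hSmeas : MeasurableSet {y : (ℝ ∙ w)ᗮ | o + (y : E) ∈ Q} :=
    (hQ.isClosed.preimage (by fun_prop : Continuous fun y : (ℝ ∙ w)ᗮ => o + (y : E))).measurableSet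
  simp only [hInt]
  refine HasDerivAt.const_mul c ?_
  rw [← integral_indicator hSmeas]
  refine (hasDerivAt_integral_of_dominated_loc_of_lip (s := Set.univ)
    (bound := (Metric.closedBall (0 : (ℝ ∙ w)ᗮ) R).indicator fun y => M * |⟪(y : E), u⟫|)
    Filter.univ_mem (Filter.Eventually.of_forall fun t => (hGint t).aestronglyMeasurable) (hGint 0)
    ?_ ?_ ?_ ?_).2
  · exact (Measurable.indicator (by fun_prop) hSmeas).aestronglyMeasurable
  · refine Filter.Eventually.of_forall fun y => LipschitzOnWith.of_dist_le_mul fun t _ t' _ => ?_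
    rw [dist_eq_norm, hGsub, Real.coe_nnabs]
    by_cases hy : y ∈ Metric.closedBall (0 : (ℝ ∙ w)ᗮ) R
    · rw [Set.indicator_of_mem hy]
      refine (intervalIntegral.norm_integral_le_of_norm_le_const fun s _ => hgM _).trans (le_of_eq ?_)
      rw [← sub_mul, abs_mul, abs_mul, abs_abs, abs_of_nonneg hM0, Real.dist_eq]
      ring
    · have : ∀ s : ℝ, g (o + y + s • w) = 0 := fun s => by
        refine Set.indicator_of_notMem (fun h => hy ?_) _
        simpa using (hbound y s h).1
      simp [this, hy]
  · rw [integrable_indicator_iff Metric.isClosed_closedBall.measurableSet]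
    exact ContinuousOn.integrableOn_compact (isCompact_closedBall _ _) (by fun_prop)
  · filter_upwards [hconv.ae_notMem_frontier_slice hQ.isClosed hp hpw ν] with y hy
    have hcont : ContinuousAt (fun s : ℝ => g (o + y + s • w)) 0 := by
      have hca : ContinuousAt g (o + y) := by
        refine hf.continuousOn.continuousAt_indicator hy
      have h2 : ContinuousAt (fun s : ℝ => o + (y : E) + s • w) 0 := by fun_prop
      exact ContinuousAt.comp (by simpa using hca) h2
    have h1 := intervalIntegral.integral_hasDerivAt_right (a := 0) (b := 0)
      (hline y).intervalIntegrable (hlinemeas y).stronglyMeasurable.stronglyMeasurableAtFilter hcont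
    have h2 : HasDerivAt (fun t : ℝ => t * ⟪(y : E), u⟫) ⟪(y : E), u⟫ 0 := by
      simpa using (hasDerivAt_id (0 : ℝ)).mul_const ⟪(y : E), u⟫
    have h3 := HasDerivAt.comp (0 : ℝ) (h₂ := fun b => ∫ s in (0:ℝ)..b, g (o + y + s • w))
      (by simpa using h1) h2
    have h4 : (fun t => G t y) = fun t => G 0 y +
        ((fun b => ∫ s in (0:ℝ)..b, g (o + y + s • w)) ∘ fun t : ℝ => t * ⟪(y : E), u⟫) t := by
      funext t
      have := hGsub t 0 y
      rw [zero_mul] at this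
      simp only [Function.comp_apply, ← this]
      ring
    rw [h4]
    convert h3.const_add (G 0 y) using 1
    by_cases hyQ : o + (y : E) ∈ Q <;> simp [Set.indicator, hg, hyQ]

end HyperplaneSlices

section FirstVariation

lemma Matrix.hasDerivAt_det_of_eq_one {n : Type*} [Fintype n] [DecidableEq n]
    {A : ℝ → Matrix n n ℝ} {A' : Matrix n n ℝ} {x : ℝ}
    (hA : ∀ i j, HasDerivAt (fun t => A t i j) (A' i j) x) (hx : A x = 1) :
    HasDerivAt (fun t => (A t).det) A'.trace x := by
  simp only [Matrix.det_apply']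
  have key := HasDerivAt.fun_sum (u := Finset.univ) fun (σ : Equiv.Perm n) _ =>
    (HasDerivAt.fun_finsetProd (u := Finset.univ) fun i _ => hA (σ i) i).const_mul
      (((Equiv.Perm.sign σ : ℤ) : ℝ))
  refine key.congr_deriv ?_
  rw [Finset.sum_eq_single 1]
  · simp [hx, Matrix.trace]
  · intro σ _ hσ
    refine mul_eq_zero_of_right _ (Finset.sum_eq_zero fun i _ => ?_)
    obtain ⟨k, hki, hk⟩ : ∃ k, k ≠ i ∧ σ k ≠ k := by
      by_contra! hcon
      refine hσ (Equiv.ext fun k => ?_)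
      by_cases hk : k = i
      · subst hk
        by_contra hne
        have := hcon (σ k) hne
        exact hne (σ.injective this)
      · exact hcon k hk
    rw [Finset.prod_eq_zero (Finset.mem_erase.2 ⟨hki, Finset.mem_univ k⟩), zero_smul]
    rw [hx, Matrix.one_apply_ne hk]
  · simp

variable {d : ℕ}

lemma centroid_apply {K : Set (Euc d)} (hK : IsCompact K) (i : Fin d) :
    centroid K i = (volume K).toReal⁻¹ * ∫ x in K, x i := by
  have h : (∫ x in K, x) i = ∫ x in K, x i :=
    ((EuclideanSpace.proj (𝕜 := ℝ) i).integral_comp_comm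
      (continuous_id.continuousOn.integrableOn_compact hK)).symm
  simp [_root_.centroid, h]

lemma covMatrix_apply {K : Set (Euc d)} (hK : IsCompact K) (i j : Fin d) :
    covMatrix K i j = (volume K).toReal⁻¹ * (∫ x in K, x i * x j) -
      centroid K i * centroid K j := by
  have hInt {f : Euc d → ℝ} (hf : Continuous f) : IntegrableOn f K :=
    hf.continuousOn.integrableOn_compact hK
  have hexp : ∫ x in K, (x i - centroid K i) * (x j - centroid K j) =
      (∫ x in K, x i * x j) - (∫ x in K, x i) * centroid K j - centroid K i * (∫ x in K, x j)
        + (volume K).toReal * (centroid K i * centroid K j) := by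
    have h1 : ∀ x : Euc d, (x i - centroid K i) * (x j - centroid K j) =
        x i * x j - x i * centroid K j - centroid K i * x j + centroid K i * centroid K j :=
      fun x => by ring
    simp only [h1]
    rw [integral_add, integral_sub, integral_sub, integral_mul_const, integral_const_mul,
      setIntegral_const, smul_eq_mul, Measure.real] <;> exact hInt (by fun_prop)
  rw [covMatrix, Matrix.of_apply, hexp]
  by_cases hV : (volume K).toReal = 0
  · simp [centroid_apply hK, hV]
  · simp only [centroid_apply hK]
    field_simp
    ring

/-- The logarithmic first variation of the isotropic constant at an isotropic body. -/
lemma hasDerivAt_det_covMatrix_div_volume_sq {K : ℝ → Set (Euc d)} {D : (Euc d → ℝ) → ℝ}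
    (hK : ∀ t, IsCompact (K t)) (hiso : IsIsotropic (K 0)) (hvol : 0 < (volume (K 0)).toReal)
    (hD : ∀ f : Euc d → ℝ, Continuous f → HasDerivAt (fun t => ∫ x in K t, f x) (D f) 0) :
    HasDerivAt (fun t => (covMatrix (K t)).det / (volume (K t)).toReal ^ 2)
      ((D (fun x => ‖x‖ ^ 2) - (d + 2) * D (fun _ => 1)) / (volume (K 0)).toReal ^ 3) 0 := by
  set V := fun t => (volume (K t)).toReal with hV
  have hV0 : V 0 ≠ 0 := hvol.ne'
  have hV' : HasDerivAt V (D fun _ => 1) 0 := by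
    have := hD (fun _ => 1) continuous_const
    simpa [Measure.real] using this
  have hc0 (i : Fin d) : centroid (K 0) i = 0 := by rw [hiso.1]; rfl
  have hM0 (i j : Fin d) : (V 0)⁻¹ * ∫ x in K 0, x i * x j = (1 : Matrix (Fin d) (Fin d) ℝ) i j := by
    rw [← hiso.2, covMatrix_apply (hK 0), hc0]
    simp [hV]
  have hVinv : HasDerivAt (fun t => (V t)⁻¹) (-(D fun _ => 1) / V 0 ^ 2) 0 := hV'.fun_inv hV0
  have hcent (i : Fin d) : ∃ c', HasDerivAt (fun t => centroid (K t) i) c' 0 := by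
    simp only [centroid_apply (hK _)]
    exact ⟨_, hVinv.fun_mul (hD (fun x => x i) (by fun_prop))⟩
  have hcov (i j : Fin d) : HasDerivAt (fun t => covMatrix (K t) i j)
      (Matrix.of (fun i j => (V 0)⁻¹ * (D fun x => x i * x j) -
        (V 0)⁻¹ * (D fun _ => 1) * (1 : Matrix (Fin d) (Fin d) ℝ) i j) i j) 0 := by
    simp only [covMatrix_apply (hK _)]
    obtain ⟨ci, hci⟩ := hcent i
    obtain ⟨cj, hcj⟩ := hcent j
    refine ((hVinv.fun_mul (hD (fun x => x i * x j) (by fun_prop))).fun_sub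
      (hci.fun_mul hcj)).congr_deriv ?_
    rw [Matrix.of_apply, hc0, hc0, ← hM0]
    field_simp
    ring
  have hdet := Matrix.hasDerivAt_det_of_eq_one hcov hiso.2
  have hnorm : D (fun x => ‖x‖ ^ 2) = ∑ i, D fun x => x i * x i := by
    refine (hD _ (by fun_prop)).unique ?_
    have h1 := HasDerivAt.fun_sum (u := Finset.univ) fun (i : Fin d) _ =>
      hD (fun x => x i * x i) (by fun_prop)
    refine h1.congr_of_eventuallyEq (Filter.Eventually.of_forall fun t => ?_)
    simp only
    rw [← integral_finsetSum]
    · refine integral_congr_ae (Filter.Eventually.of_forall fun x => ?_)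
      simp only [EuclideanSpace.norm_sq_eq, Real.norm_eq_abs, sq_abs]
      simp [pow_two]
    · exact fun i _ => ContinuousOn.integrableOn_compact (hK t) (by fun_prop)
  refine (hdet.fun_div (hV'.fun_pow 2) (pow_ne_zero 2 hV0)).congr_deriv ?_
  rw [hiso.2, Matrix.det_one, hnorm, Matrix.trace]
  simp only [Matrix.diag_apply, Matrix.of_apply, Matrix.one_apply_eq, Finset.sum_sub_distrib,
    ← Finset.mul_sum, Finset.sum_const, Finset.card_univ, Fintype.card_fin, nsmul_eq_mul]
  change _ = _ / V 0 ^ 3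
  field_simp
  push_cast
  ring

/-- An isotropic body which is a local extremum of the isotropic constant is a critical point
along every family of convex bodies which is continuous in the Hausdorff metric. -/
lemma IsLocalExtremumOfIsoConst.first_variation_eq (hd : 0 < d) {K : ℝ → Set (Euc d)}
    {D : (Euc d → ℝ) → ℝ} (hK : ∀ t, IsCompact (K t)) (hbody : ∀ᶠ t in nhds 0, IsConvexBody (K t))
    (hdist : Filter.Tendsto (fun t => Metric.hausdorffDist (K t) (K 0)) (nhds 0) (nhds 0))
    (hiso : IsIsotropic (K 0)) (hext : IsLocalExtremumOfIsoConst (K 0))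
    (hD : ∀ f : Euc d → ℝ, Continuous f → HasDerivAt (fun t => ∫ x in K t, f x) (D f) 0) :
    D (fun x => ‖x‖ ^ 2) = (d + 2) * D (fun _ => 1) := by
  have hvol : 0 < (volume (K 0)).toReal := by
    have h0 := hbody.self_of_nhds
    exact ENNReal.toReal_pos
      ((isOpen_interior.measure_pos volume h0.2.2).trans_le (measure_mono interior_subset)).ne'
      h0.1.measure_lt_top.ne
  have hderiv := hasDerivAt_det_covMatrix_div_volume_sq hK hiso hvol hD
  set g := fun t => (covMatrix (K t)).det / (volume (K t)).toReal ^ 2 with hg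
  have hg0 : 0 < g 0 := by
    simp only [hg, hiso.2, Matrix.det_one]
    positivity
  have hgpos : ∀ᶠ t in nhds 0, 0 < g t := hderiv.continuousAt.eventually (lt_mem_nhds hg0)
  have hz : (0 : ℝ) < (2 * (d : ℝ))⁻¹ := by positivity
  have hextr : IsLocalExtr g 0 := by
    rcases hext with ⟨ε, hε, h⟩ | ⟨ε, hε, h⟩
    · right
      filter_upwards [hgpos, hbody, hdist.eventually (gt_mem_nhds hε)] with t h1 h2 h3
      exact (Real.rpow_le_rpow_iff h1.le hg0.le hz).1 (h (K t) h2 h3)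
    · left
      filter_upwards [hgpos, hbody, hdist.eventually (gt_mem_nhds hε)] with t h1 h2 h3
      exact (Real.rpow_le_rpow_iff hg0.le h1.le hz).1 (h (K t) h2 h3)
  have := hextr.hasDerivAt_eq_zero hderiv
  rw [div_eq_zero_iff, or_iff_left (by positivity)] at this
  linarith

end FirstVariation

section CutBodies

open scoped Topology

variable {E : Type*} [NormedAddCommGroup E] [InnerProductSpace ℝ E]

lemma isCompact_inter_halfspace {Q : Set E} (hQ : IsCompact Q) (o u w : E) (t : ℝ) :
    IsCompact {x ∈ Q | ⟪x - o, w⟫ ≤ t * ⟪x - o, u⟫} :=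
  hQ.inter_right (isClosed_le (by fun_prop : Continuous fun x : E => ⟪x - o, w⟫)
    (by fun_prop : Continuous fun x : E => t * ⟪x - o, u⟫))

lemma Convex.inter_halfspace {Q : Set E} (hQ : Convex ℝ Q) (o u w : E) (t : ℝ) :
    Convex ℝ {x ∈ Q | ⟪x - o, w⟫ ≤ t * ⟪x - o, u⟫} := by
  refine hQ.inter fun x hx y hy a b ha hb hab => ?_
  have hx : ⟪x - o, w⟫ ≤ t * ⟪x - o, u⟫ := hx
  have hy : ⟪y - o, w⟫ ≤ t * ⟪y - o, u⟫ := hy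
  have hsub : a • x + b • y - o = a • (x - o) + b • (y - o) := by
    obtain rfl : a = 1 - b := by linarith
    module
  change ⟪a • x + b • y - o, w⟫ ≤ t * ⟪a • x + b • y - o, u⟫
  rw [hsub]
  simp only [inner_add_left, real_inner_smul_left]
  nlinarith [mul_le_mul_of_nonneg_left hx ha, mul_le_mul_of_nonneg_left hy hb]

lemma eventually_nonempty_interior_inter_halfspace {Q : Set E} {o u w q : E}
    (hq : q ∈ interior Q) (hqw : ⟪q - o, w⟫ < 0) :
    ∀ᶠ t : ℝ in 𝓝 0, (interior {x ∈ Q | ⟪x - o, w⟫ ≤ t * ⟪x - o, u⟫}).Nonempty := by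
  have hcont : Continuous fun t : ℝ => t * ⟪q - o, u⟫ := by fun_prop
  have h0 : ⟪q - o, w⟫ < 0 * ⟪q - o, u⟫ := by simpa using hqw
  filter_upwards [hcont.continuousAt.eventually (lt_mem_nhds h0)] with t ht
  refine ⟨q, mem_interior_iff_mem_nhds.2 ?_⟩
  have h1 : ∀ᶠ x in 𝓝 q, ⟪x - o, w⟫ < t * ⟪x - o, u⟫ :=
    (isOpen_lt (by fun_prop : Continuous fun x : E => ⟪x - o, w⟫)
      (by fun_prop : Continuous fun x : E => t * ⟪x - o, u⟫)).mem_nhds ht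
  filter_upwards [mem_interior_iff_mem_nhds.1 hq, h1] with x hx hx'
  exact ⟨hx, hx'.le⟩

lemma tendsto_hausdorffDist_inter_halfspace {Q : Set E} (hQ : IsCompact Q) (hconv : Convex ℝ Q)
    {o u w q : E} (hq : q ∈ Q) (hqw : ⟪q - o, w⟫ < 0) :
    Filter.Tendsto (fun t : ℝ => Metric.hausdorffDist {x ∈ Q | ⟪x - o, w⟫ ≤ t * ⟪x - o, u⟫}
      {x ∈ Q | ⟪x - o, w⟫ ≤ 0 * ⟪x - o, u⟫}) (𝓝 0) (𝓝 0) := by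
  obtain ⟨B, hB⟩ := hQ.exists_bound_of_continuousOn
    (f := fun x => ⟪x - o, u⟫) (by fun_prop)
  have hB0 : 0 ≤ B := (norm_nonneg _).trans (hB q hq)
  obtain ⟨a, ha⟩ : ∃ a, a = -⟪q - o, w⟫ := ⟨_, rfl⟩
  have ha0 : 0 < a := by linarith
  have hmul (t : ℝ) {x : E} (hx : x ∈ Q) : |t * ⟪x - o, u⟫| ≤ |t| * B := by
    rw [abs_mul]
    exact mul_le_mul_of_nonneg_left (hB x hx) (abs_nonneg t)
  have hpush (t : ℝ) (ht : 2 * (|t| * B) ≤ a) (x : E) (hx : x ∈ Q) (hxt : ⟪x - o, w⟫ ≤ |t| * B) :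
      ∃ y ∈ Q, ⟪y - o, w⟫ ≤ -(|t| * B) ∧ dist x y ≤ 2 * (|t| * B) / a * Metric.diam Q := by
    set l := 2 * (|t| * B) / a with hl
    have hl0 : 0 ≤ l := by positivity
    have hl1 : l ≤ 1 := (div_le_one ha0).2 ht
    have hla : l * a = 2 * (|t| * B) := by rw [hl]; field_simp
    refine ⟨(1 - l) • x + l • q, hconv hx hq (by linarith) hl0 (by ring), ?_, ?_⟩
    · have hsub : (1 - l) • x + l • q - o = (1 - l) • (x - o) + l • (q - o) := by module
      rw [hsub]
      simp only [inner_add_left, real_inner_smul_left]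
      have hnn : 0 ≤ |t| * B := by positivity
      have hqa : ⟪q - o, w⟫ = -a := by linarith
      rw [hqa]
      nlinarith [mul_le_mul_of_nonneg_left hxt (by linarith : 0 ≤ 1 - l)]
    · have hsub : x - ((1 - l) • x + l • q) = l • (x - q) := by module
      rw [dist_eq_norm, hsub, norm_smul, Real.norm_of_nonneg hl0, ← dist_eq_norm]
      exact mul_le_mul_of_nonneg_left (Metric.dist_le_diam_of_mem hQ.isBounded hx hq) hl0
  have hsmall : ∀ᶠ t : ℝ in 𝓝 0, 2 * (|t| * B) ≤ a := by
    have hcont : Continuous fun t : ℝ => 2 * (|t| * B) := by fun_prop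
    have := hcont.continuousAt.eventually (gt_mem_nhds (by simpa using ha0 : 2 * (|0| * B) < a))
    exact this.mono fun _ h => h.le
  have hlim : Filter.Tendsto (fun t : ℝ => 2 * (|t| * B) / a * Metric.diam Q) (𝓝 0) (𝓝 0) := by
    have hcont : Continuous fun t : ℝ => 2 * (|t| * B) / a * Metric.diam Q := by fun_prop
    simpa using hcont.tendsto 0
  refine tendsto_of_tendsto_of_tendsto_of_le_of_le' tendsto_const_nhds hlim
    (Filter.Eventually.of_forall fun _ => Metric.hausdorffDist_nonneg) ?_
  filter_upwards [hsmall] with t ht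
  refine Metric.hausdorffDist_le_of_mem_dist (by positivity) ?_ ?_
  · rintro x ⟨hx, hxt⟩
    obtain ⟨y, hyQ, hy, hd⟩ := hpush t ht x hx
      (hxt.trans ((le_abs_self _).trans (hmul t hx)))
    refine ⟨y, ⟨hyQ, hy.trans ?_⟩, hd⟩
    rw [zero_mul]
    exact neg_nonpos.2 (by positivity)
  · rintro x ⟨hx, hxt⟩
    rw [zero_mul] at hxt
    obtain ⟨y, hyQ, hy, hd⟩ := hpush t ht x hx (hxt.trans (by positivity))
    exact ⟨y, ⟨hyQ, hy.trans (neg_le_of_abs_le (hmul t hyQ))⟩, hd⟩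

end CutBodies

section Extension

/-- Enlarging a convex set `P` by the part of a convex superset `T` above a hyperplane preserves
convexity, provided that `T` meets the hyperplane inside `P`. -/
lemma Convex.union_of_separated {E : Type*} [AddCommGroup E] [Module ℝ E] {P T : Set E}
    (hP : Convex ℝ P) (hT : Convex ℝ T) (σ : E →ᵃ[ℝ] ℝ) (hPT : P ⊆ T)
    (hTP : ∀ x ∈ T, σ x = 0 → x ∈ P) :
    Convex ℝ (P ∪ {x ∈ T | 0 ≤ σ x}) := by
  have hσ (x y : E) (a b : ℝ) (hab : a + b = 1) : σ (a • x + b • y) = a * σ x + b * σ y :=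
    Convex.combo_affine_apply hab
  have hR : Convex ℝ {x ∈ T | 0 ≤ σ x} := by
    refine hT.inter fun x hx y hy a b ha hb hab => ?_
    have hx : 0 ≤ σ x := hx
    have hy : 0 ≤ σ y := hy
    change 0 ≤ σ (a • x + b • y)
    rw [hσ _ _ _ _ hab]
    positivity
  have hmix {x y : E} (hx : x ∈ P) (hyT : y ∈ T) (hyσ : 0 ≤ σ y) {a b : ℝ} (ha : 0 ≤ a)
      (hb : 0 ≤ b) (hab : a + b = 1) : a • x + b • y ∈ P ∪ {x ∈ T | 0 ≤ σ x} := by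
    have hzσ := hσ x y a b hab
    by_cases hz : 0 ≤ σ (a • x + b • y)
    · exact Or.inr ⟨hT (hPT hx) hyT ha hb hab, hz⟩
    left
    have hz' : a * σ x + b * σ y < 0 := by linarith
    have hxσ : σ x < 0 := by
      by_contra hcon
      have : 0 ≤ σ x := not_lt.1 hcon
      have : 0 ≤ a * σ x + b * σ y := by positivity
      linarith
    obtain ⟨p, hp⟩ : ∃ p, p = -σ x := ⟨_, rfl⟩
    obtain ⟨q, hq⟩ : ∃ q, q = σ y := ⟨_, rfl⟩
    have hp0 : 0 < p := by linarith
    have hq0 : 0 ≤ q := by linarith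
    have hpq : 0 < q + p := by linarith
    have hsum : q / (q + p) + p / (q + p) = 1 := by field_simp
    have hcross : (q / (q + p)) • x + (p / (q + p)) • y ∈ P := by
      refine hTP _ (hT (hPT hx) hyT (by positivity) (by positivity) hsum) ?_
      rw [hσ _ _ _ _ hsum, ← hq, show σ x = -p by linarith]
      ring
    have hbq : b * q ≤ a * p := by
      rw [hq, hp]
      linarith
    have key := hP hx hcross (a := (a * p - b * q) / p) (b := b * (q + p) / p)
      (div_nonneg (by linarith) hp0.le) (by positivity)
      (by obtain rfl : a = 1 - b := by linarith
          field_simp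
          ring)
    convert key using 1
    match_scalars <;> field_simp
    ring
  rintro x (hx | hx) y (hy | hy) a b ha hb hab
  · exact Or.inl (hP hx hy ha hb hab)
  · exact hmix hx hy.1 hy.2 ha hb hab
  · rw [add_comm]
    exact hmix hy hx.1 hx.2 hb ha (by linarith)
  · exact Or.inr (hR hx hy ha hb hab)

variable {E : Type*} [NormedAddCommGroup E] [InnerProductSpace ℝ E]

/-- The vertices of a simplex in a hyperplane, together with a point off that hyperplane, form an
affine basis whose last coordinate is the height over the hyperplane. -/
lemma exists_affineBasis_height [FiniteDimensional ℝ E] {d : ℕ} (hdim : Module.finrank ℝ E = d)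
    {v : Fin d → E} (hv : AffineIndependent ℝ v) (j₀ : Fin d) {o w : E} (hw : ‖w‖ = 1)
    (hvw : ∀ j, ⟪v j - o, w⟫ = 0) :
    ∃ b : AffineBasis (Option (Fin d)) ℝ E, (∀ j, b (some j) = v j) ∧
      ∀ x, b.coord none x = ⟪x - o, w⟫ := by
  set p : Option (Fin d) → E := fun i => i.elim (v j₀ + w) v with hp
  have hww : ⟪w, w⟫ = 1 := by rw [real_inner_self_eq_norm_sq, hw, one_pow]
  have hpnone : ⟪p none - o, w⟫ = 1 := by
    change ⟪v j₀ + w - o, w⟫ = 1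
    rw [add_sub_right_comm, inner_add_left, hvw, hww, zero_add]
  have hpsome (j : Fin d) : ⟪p (some j) - o, w⟫ = 0 := hvw j
  have hind : AffineIndependent ℝ p := by
    refine AffineIndependent.affineIndependent_of_notMem_span (i := none) ?_ ?_
    · let e : {y : Option (Fin d) // y ≠ none} ↪ Fin d :=
        ⟨fun x => x.1.get (Option.isSome_iff_ne_none.2 x.2), fun x y hxy =>
          Subtype.ext (Option.get_inj.1 hxy)⟩
      have hpe : (fun x : {y : Option (Fin d) // y ≠ none} => p x) = v ∘ e := by
        funext ⟨x, hx⟩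
        rcases x with _ | j
        · exact absurd rfl hx
        · rfl
      rw [hpe]
      exact hv.comp_embedding e
    · intro hmem
      have hle : affineSpan ℝ (p '' {x | x ≠ none}) ≤ AffineSubspace.mk' (v j₀) (ℝ ∙ w)ᗮ := by
        rw [affineSpan_le]
        rintro _ ⟨_ | j, hx, rfl⟩
        · exact absurd rfl hx
        · change _ ∈ AffineSubspace.mk' _ _
          rw [AffineSubspace.mem_mk', Submodule.mem_orthogonal_singleton_iff_inner_left,
            vsub_eq_sub, ← sub_sub_sub_cancel_right _ _ o, inner_sub_left, hvw, hpsome, sub_zero]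
      have := hle hmem
      rw [AffineSubspace.mem_mk', Submodule.mem_orthogonal_singleton_iff_inner_left,
        vsub_eq_sub, ← sub_sub_sub_cancel_right _ _ o, inner_sub_left, hvw, hpnone] at this
      norm_num at this
  have htop : affineSpan ℝ (Set.range p) = ⊤ := by
    rw [hind.affineSpan_eq_top_iff_card_eq_finrank_add_one, hdim]
    simp
  let b : AffineBasis (Option (Fin d)) ℝ E := ⟨p, hind, htop⟩
  refine ⟨b, fun _ => rfl, fun x => ?_⟩
  have hbp (i : Option (Fin d)) : b i = p i := rfl
  have hx : x - o = ∑ i, b.coord i x • (p i - o) := by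
    simp only [smul_sub, Finset.sum_sub_distrib, ← Finset.sum_smul, b.sum_coord_apply_eq_one,
      one_smul, ← hbp, b.linear_combination_coord_eq_self]
  rw [hx, sum_inner, Fintype.sum_option]
  simp [real_inner_smul_left, hpnone, hpsome]

/-- A polytope with a simplicial facet extends beyond that facet to a convex body. -/
lemma exists_convex_extension_beyond_facet [FiniteDimensional ℝ E] {d : ℕ}
    (hdim : Module.finrank ℝ E = d) {S : Finset E} {P F : Set E} (hPS : P = convexHull ℝ (S : Set E))
    {v : Fin d → E} (hv : AffineIndependent ℝ v) (hFv : F = convexHull ℝ (Set.range v))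
    (j₀ : Fin d) {o w : E} (hw : ‖w‖ = 1) (hPw : ∀ x ∈ P, ⟪x - o, w⟫ ≤ 0)
    (hPF : {x ∈ P | ⟪x - o, w⟫ = 0} = F) {q : E} (hq : q ∈ interior P) (hqw : ⟪q - o, w⟫ < 0) :
    ∃ Q : Set E, IsCompact Q ∧ Convex ℝ Q ∧ {x ∈ Q | ⟪x - o, w⟫ ≤ 0} = P ∧
      ∃ p ∈ interior Q, ⟪p - o, w⟫ = 0 := by
  have hvF (j : Fin d) : v j ∈ F := hFv ▸ subset_convexHull ℝ _ ⟨j, rfl⟩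
  obtain ⟨b, hbv, hbσ⟩ := exists_affineBasis_height hdim hv j₀ hw
    (fun j => (hPF.symm ▸ hvF j : v j ∈ {x ∈ P | ⟪x - o, w⟫ = 0}).2)
  simp only [← hbσ] at hPw hPF hqw ⊢
  set σ := b.coord none with hσ
  have hFcoord : ∀ x ∈ F, ∀ j, 0 ≤ b.coord (some j) x := by
    intro x hx j
    have hsub : F ⊆ convexHull ℝ (Set.range b) := by
      rw [hFv]
      refine convexHull_mono ?_
      rintro _ ⟨k, rfl⟩
      exact ⟨some k, hbv k⟩
    have := hsub hx
    rw [b.convexHull_eq_nonneg_coord] at this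
    exact this (some j)
  have hcoordF (x : E) (hx0 : σ x = 0) (hx : ∀ j, 0 ≤ b.coord (some j) x) : x ∈ F := by
    have h1 := b.linear_combination_coord_eq_self x
    have h2 := b.sum_coord_apply_eq_one x
    rw [Fintype.sum_option] at h1 h2
    rw [← hσ, hx0, zero_add] at h2
    rw [← hσ, hx0, zero_smul, zero_add] at h1
    rw [← h1, hFv]
    refine (convex_convexHull ℝ _).sum_mem (fun j _ => hx j) h2 fun j _ => ?_
    rw [hbv]
    exact subset_convexHull ℝ _ ⟨j, rfl⟩
  have hSP : (S : Set E) ⊆ P := hPS ▸ subset_convexHull ℝ _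
  obtain ⟨C, hC0, hC⟩ : ∃ C : ℝ, 0 ≤ C ∧ ∀ x ∈ S, ∀ j, C * σ x ≤ b.coord (some j) x := by
    refine ⟨∑ x ∈ S, ∑ j, |b.coord (some j) x / σ x|, by positivity, fun x hx j => ?_⟩
    rcases (hPw x (hSP hx)).lt_or_eq with h | h
    · have h1 : |b.coord (some j) x / σ x| ≤ ∑ x ∈ S, ∑ j, |b.coord (some j) x / σ x| :=
        (Finset.single_le_sum (f := fun j => |b.coord (some j) x / σ x|)
          (fun _ _ => abs_nonneg _) (Finset.mem_univ j)).trans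
          (Finset.single_le_sum (f := fun x => ∑ j, |b.coord (some j) x / σ x|)
            (fun _ _ => by positivity) hx)
      refine (mul_le_mul_of_nonpos_right h1 h.le).trans ?_
      rw [abs_div, abs_of_neg h, div_mul_eq_mul_div, div_neg, mul_div_cancel_right₀ _ h.ne]
      exact neg_abs_le _
    · rw [h, mul_zero]
      exact hFcoord x (hPF ▸ ⟨hSP hx, h⟩) j
  set φ : Fin d → E →ᵃ[ℝ] ℝ := fun j => b.coord (some j) - C • σ with hφ
  have hφapp (j : Fin d) (x : E) : φ j x = b.coord (some j) x - C * σ x := rfl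
  set T : Set E := {x | ∀ j, 0 ≤ φ j x} with hT
  have hTconv : Convex ℝ T := by
    have : T = ⋂ j, φ j ⁻¹' Set.Ici 0 := by ext x; simp [hT]
    rw [this]
    exact convex_iInter fun j => (convex_Ici 0).affine_preimage (φ j)
  have hPT : P ⊆ T := by
    rw [hPS]
    refine convexHull_min (fun x hx j => ?_) hTconv
    rw [hφapp]
    linarith [hC x hx j]
  have hTF (x : E) (hx : x ∈ T) (hx0 : σ x = 0) : x ∈ F := by
    refine hcoordF x hx0 fun j => ?_
    have := hx j
    rwa [hφapp, hx0, mul_zero, sub_zero] at this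
  have hFP : F ⊆ P := hPF ▸ fun x hx => hx.1
  have hPconv : Convex ℝ P := hPS ▸ convex_convexHull ℝ _
  have hQconv := hPconv.union_of_separated hTconv σ hPT fun x hx hx0 => hFP (hTF x hx hx0)
  have hcoordcont (i : Option (Fin d)) : Continuous (b.coord i) :=
    AffineMap.continuous_of_finiteDimensional _
  have hRcompact : IsCompact {x ∈ T | 0 ≤ σ x} := by
    have hbc : IsCompact (convexHull ℝ (Set.range b)) :=
      (Set.finite_range b).isCompact_convexHull ℝ
    refine hbc.of_isClosed_subset ?_ ?_
    · refine IsClosed.inter ?_ (isClosed_le continuous_const (hcoordcont none))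
      have : T = ⋂ j, {x | 0 ≤ b.coord (some j) x - C * σ x} := by
        ext x; simp [hT, hφapp]
      rw [this]
      exact isClosed_iInter fun j => isClosed_le continuous_const
        ((hcoordcont _).sub (continuous_const.mul (hcoordcont none)))
    · rintro x ⟨hxT, hx0⟩
      rw [b.convexHull_eq_nonneg_coord]
      rintro (_ | j)
      · exact hx0
      · have h1 := hxT j
        rw [hφapp] at h1
        have : 0 ≤ C * σ x := mul_nonneg hC0 hx0
        linarith
  have hPcompact : IsCompact P := hPS ▸ S.finite_toSet.isCompact_convexHull ℝ
  refine ⟨P ∪ {x ∈ T | 0 ≤ σ x}, hPcompact.union hRcompact, hQconv, ?_, ?_⟩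
  · ext x
    constructor
    · rintro ⟨hx | ⟨hxT, hx0⟩, hx'⟩
      · exact hx
      · exact hFP (hTF x hxT (le_antisymm hx' hx0))
    · exact fun hx => ⟨Or.inl hx, hPw x hx⟩
  · -- a point of the enlarged body strictly above the facet
    have hd : 0 < (d : ℝ) := by exact_mod_cast j₀.pos
    obtain ⟨z, hzT, hz0⟩ : ∃ z ∈ T, 0 < σ z := by
      set m : E := ∑ j, (d : ℝ)⁻¹ • v j with hm
      have hcard : ∑ _j : Fin d, (d : ℝ)⁻¹ = 1 := by
        simp [hd.ne']
      have hbm (i : Option (Fin d)) : b.coord i m = ∑ j, (d : ℝ)⁻¹ * b.coord i (v j) := by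
        have := Finset.univ.map_affineCombination v (fun _ => (d : ℝ)⁻¹) hcard (b.coord i)
        rw [Finset.univ.affineCombination_eq_linear_combination _ _ hcard,
          Finset.univ.affineCombination_eq_linear_combination _ _ hcard] at this
        simpa using this
      have hσm : σ m = 0 := by
        rw [hσ, hbm]
        refine Finset.sum_eq_zero fun j _ => ?_
        rw [← hbv, b.coord_apply]
        simp
      have hjm (j : Fin d) : b.coord (some j) m = (d : ℝ)⁻¹ := by
        rw [hbm]
        simp [← hbv, b.coord_apply]
      have hsum : d * C / (1 + d * C) + 1 / (1 + d * C) = 1 := by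
        have : 0 < 1 + d * C := by positivity
        field_simp
        ring
      have hcombo (i : Option (Fin d)) :
          b.coord i ((d * C / (1 + d * C)) • m + (1 / (1 + d * C)) • b none) =
            d * C / (1 + d * C) * b.coord i m + 1 / (1 + d * C) * b.coord i (b none) :=
        Convex.combo_affine_apply hsum
      refine ⟨(d * C / (1 + d * C)) • m + (1 / (1 + d * C)) • b none, fun j => ?_, ?_⟩
      · rw [hφapp, hσ, hcombo, hcombo, ← hσ, hσm, hjm, b.coord_apply, b.coord_apply]
        have : 0 < 1 + d * C := by positivity
        simp
        field_simp
        simp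
      · rw [hσ, hcombo, ← hσ, hσm, b.coord_apply]
        have : 0 < 1 + d * C := by positivity
        simp
        positivity
    have hqQ : q ∈ interior (P ∪ {x ∈ T | 0 ≤ σ x}) :=
      interior_mono Set.subset_union_left hq
    have hpos : 0 < σ z - σ q := by linarith
    have hsum : σ z / (σ z - σ q) + -σ q / (σ z - σ q) = 1 := by
      field_simp
      ring
    refine ⟨(σ z / (σ z - σ q)) • q + (-σ q / (σ z - σ q)) • z,
      hQconv.openSegment_interior_self_subset_interior hqQ (Or.inr ⟨hzT, hz0.le⟩)
        ⟨_, _, by positivity, div_pos (by linarith) hpos, hsum, rfl⟩, ?_⟩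
    rw [Convex.combo_affine_apply hsum, smul_eq_mul, smul_eq_mul]
    ring

end Extension

section PolarAngle

lemma polarAngle_eq_zero_iff {a b : ℝ} : polarAngle a b = 0 ↔ 0 ≤ a ∧ b = 0 := by
  rw [← Complex.arg_eq_zero_iff (z := ⟨a, b⟩), polarAngle]
  split_ifs with h
  · simp [h, Real.pi_ne_zero]
  · rfl

lemma snd_nonpos_of_polarAngle_mem_Ioc {a b : ℝ}
    (h : polarAngle a b ∈ Set.Ioc (-Real.pi) 0) : b ≤ 0 := by
  rw [polarAngle] at h
  split_ifs at h with hpi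
  · exact absurd h.1 (lt_irrefl _)
  · rcases h.2.lt_or_eq with hlt | heq
    · exact (Complex.arg_neg_iff.1 hlt).le
    · exact (Complex.arg_eq_zero_iff.1 heq).2.le

end PolarAngle

section Facet

/-- An exposed face spanned by `d` affinely independent points of a hyperplane contains the whole
intersection of the polytope with that hyperplane. -/
lemma IsExposed.mem_of_inner_eq_zero {E : Type*} [NormedAddCommGroup E] [InnerProductSpace ℝ E]
    [FiniteDimensional ℝ E] {d : ℕ} (hdim : Module.finrank ℝ E = d) {P F : Set E}
    (hF : IsExposed ℝ P F) {v : Fin d → E} (hv : AffineIndependent ℝ v) (j₀ : Fin d)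
    (hvF : ∀ j, v j ∈ F) {o w : E} (hw : w ≠ 0) (hvw : ∀ j, ⟪v j - o, w⟫ = 0) {x : E} (hx : x ∈ P)
    (hxw : ⟪x - o, w⟫ = 0) : x ∈ F := by
  obtain ⟨l, hl⟩ := hF ⟨v j₀, hvF j₀⟩
  have hd : d = d - 1 + 1 := by have := j₀.pos; omega
  have hlv (i j : Fin d) : l (v i) = l (v j) := by
    have hi := hvF i
    have hj := hvF j
    rw [hl] at hi hj
    exact le_antisymm (hj.2 _ hi.1) (hi.2 _ hj.1)
  have hle : vectorSpan ℝ (Set.range v) ≤ (ℝ ∙ w)ᗮ := by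
    rw [vectorSpan_def, Submodule.span_le]
    rintro _ ⟨_, ⟨i, rfl⟩, _, ⟨j, rfl⟩, rfl⟩
    change v i - v j ∈ (ℝ ∙ w)ᗮ
    rw [Submodule.mem_orthogonal_singleton_iff_inner_left, ← sub_sub_sub_cancel_right _ _ o,
      inner_sub_left, hvw, hvw, sub_zero]
  have hker : vectorSpan ℝ (Set.range v) ≤ LinearMap.ker (l : E →ₗ[ℝ] ℝ) := by
    rw [vectorSpan_def, Submodule.span_le]
    rintro _ ⟨_, ⟨i, rfl⟩, _, ⟨j, rfl⟩, rfl⟩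
    simp [hlv i j]
  have heq : vectorSpan ℝ (Set.range v) = (ℝ ∙ w)ᗮ := by
    refine Submodule.eq_of_le_of_finrank_eq hle ?_
    have : Fact (Module.finrank ℝ E = d - 1 + 1) := ⟨hdim.trans hd⟩
    rw [hv.finrank_vectorSpan (n := d - 1) (by simpa using hd),
      Submodule.finrank_orthogonal_span_singleton (n := d - 1) hw]
  have hmem : x - v j₀ ∈ vectorSpan ℝ (Set.range v) := by
    rw [heq, Submodule.mem_orthogonal_singleton_iff_inner_left, ← sub_sub_sub_cancel_right _ _ o,
      inner_sub_left, hvw, hxw, sub_zero]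
  have hlx : l x = l (v j₀) := by
    have := hker hmem
    rwa [LinearMap.mem_ker, map_sub, sub_eq_zero] at this
  have hj := hvF j₀
  rw [hl] at hj ⊢
  exact ⟨hx, fun y hy => hlx ▸ hj.2 y hy⟩

lemma inner_neg_of_mem_interior {E : Type*} [NormedAddCommGroup E] [InnerProductSpace ℝ E]
    {P : Set E} {o w q : E} (hw : ‖w‖ = 1) (hPw : ∀ x ∈ P, ⟪x - o, w⟫ ≤ 0)
    (hq : q ∈ interior P) : ⟪q - o, w⟫ < 0 := by
  have hcont : Continuous fun ε : ℝ => q + ε • w := by fun_prop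
  have hnhds : ∀ᶠ ε : ℝ in nhdsWithin 0 (Set.Ioi 0), q + ε • w ∈ P :=
    (hcont.continuousAt.eventually
      (by simpa using mem_interior_iff_mem_nhds.1 hq)).filter_mono nhdsWithin_le_nhds
  obtain ⟨ε, hεP, hε⟩ := (hnhds.and self_mem_nhdsWithin).exists
  have hε : 0 < ε := hε
  have := hPw _ hεP
  rw [add_sub_right_comm, inner_add_left, real_inner_smul_left, real_inner_self_eq_norm_sq, hw] at this
  linarith

/-- Integration over a subset of a hyperplane with respect to Hausdorff measure. -/
lemma setIntegral_hausdorffMeasure_hyperplane {E : Type*} [NormedAddCommGroup E]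
    [InnerProductSpace ℝ E] [FiniteDimensional ℝ E] [MeasurableSpace E] [BorelSpace E]
    {F : Set E} {o w : E} (hF : ∀ x ∈ F, ⟪x - o, w⟫ = 0) {k : ℝ}
    (hk : 0 ≤ k) (h : E → ℝ) :
    ∫ x in F, h x ∂μH[k] = ∫ y in {y : (ℝ ∙ w)ᗮ | o + (y : E) ∈ F}, h (o + y) ∂μH[k] := by
  set ι : (ℝ ∙ w)ᗮ → E := fun y => o + (y : E) with hι
  have hiso : Isometry ι := (isometry_add_left o).comp isometry_subtype_coe
  have hsub : F ⊆ Set.range ι := fun x hx => ⟨⟨x - o, by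
    rw [Submodule.mem_orthogonal_singleton_iff_inner_left]; exact hF x hx⟩, by simp [hι]⟩
  have hemb : MeasurableEmbedding ι := hiso.isClosedEmbedding.measurableEmbedding
  have := hemb.setIntegral_map (μ := μH[k]) h F
  rw [hiso.map_hausdorffMeasure (Or.inl hk),
    Measure.restrict_restrict_of_subset hsub] at this
  exact this

/-- A nonzero linear functional which is nonnegative on a slice with interior points has positive
integral over it. -/
lemma integral_slice_inner_pos {E : Type*} [NormedAddCommGroup E] [InnerProductSpace ℝ E]
    [FiniteDimensional ℝ E] [MeasurableSpace E] [BorelSpace E] {Q : Set E} (hQ : IsCompact Q)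
    {o u w p : E} (hun : ‖u‖ = 1) (huw : ⟪u, w⟫ = 0) (hp : p ∈ interior Q) (hpw : ⟪p - o, w⟫ = 0)
    (hpos : ∀ y : (ℝ ∙ w)ᗮ, o + (y : E) ∈ Q → 0 ≤ ⟪(y : E), u⟫)
    (ν : Measure (ℝ ∙ w)ᗮ) [ν.IsAddHaarMeasure] :
    0 < ∫ y in {y : (ℝ ∙ w)ᗮ | o + (y : E) ∈ Q}, ⟪(y : E), u⟫ ∂ν := by
  have hiso : Isometry fun y : (ℝ ∙ w)ᗮ => o + (y : E) :=
    (isometry_add_left o).comp isometry_subtype_coe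
  have hemb := hiso.isClosedEmbedding
  have hScompact : IsCompact {y : (ℝ ∙ w)ᗮ | o + (y : E) ∈ Q} := hemb.isCompact_preimage hQ
  have hcont : Continuous fun y : (ℝ ∙ w)ᗮ => ⟪(y : E), u⟫ := by fun_prop
  rw [setIntegral_pos_iff_support_of_nonneg_ae
    ((ae_restrict_mem hScompact.measurableSet).mono fun y hy => hpos y hy)
    (hcont.continuousOn.integrableOn_compact hScompact)]
  set O : Set (ℝ ∙ w)ᗮ := {y | o + (y : E) ∈ interior Q} with hO
  have hOopen : IsOpen O := isOpen_interior.preimage hemb.continuous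
  have hsub : Function.support (fun y : (ℝ ∙ w)ᗮ => ⟪(y : E), u⟫) ∩ O ⊆
      Function.support (fun y : (ℝ ∙ w)ᗮ => ⟪(y : E), u⟫) ∩ {y | o + (y : E) ∈ Q} :=
    Set.inter_subset_inter_right _ fun y (hy : o + (y : E) ∈ interior Q) =>
      (interior_subset hy : o + (y : E) ∈ Q)
  refine lt_of_lt_of_le (IsOpen.measure_pos ν (hcont.isOpen_support.inter hOopen) ?_)
    (measure_mono hsub)
  have hpmem : p - o ∈ (ℝ ∙ w)ᗮ := Submodule.mem_orthogonal_singleton_iff_inner_left.2 hpw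
  have humem : u ∈ (ℝ ∙ w)ᗮ := Submodule.mem_orthogonal_singleton_iff_inner_left.2 huw
  have hpO : (⟨p - o, hpmem⟩ : (ℝ ∙ w)ᗮ) ∈ O := by simpa [hO] using hp
  by_cases hpu : ⟪p - o, u⟫ = 0
  · have hline : Continuous fun ε : ℝ => (⟨p - o, hpmem⟩ : (ℝ ∙ w)ᗮ) + ε • ⟨u, humem⟩ := by
      fun_prop
    have hev : ∀ᶠ ε : ℝ in nhdsWithin 0 (Set.Ioi 0),
        (⟨p - o, hpmem⟩ : (ℝ ∙ w)ᗮ) + ε • ⟨u, humem⟩ ∈ O :=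
      (hline.continuousAt.eventually
        (by simpa using hOopen.mem_nhds hpO)).filter_mono nhdsWithin_le_nhds
    obtain ⟨ε, hεO, hε⟩ := (hev.and self_mem_nhdsWithin).exists
    have hε : 0 < ε := hε
    refine ⟨_, ?_, hεO⟩
    change ⟪p - o + ε • u, u⟫ ≠ 0
    rw [inner_add_left, hpu, real_inner_smul_left, real_inner_self_eq_norm_sq, hun]
    simpa using hε.ne'
  · exact ⟨_, hpu, hpO⟩

end Facet

/-- Let `P` be a `d`-dimensional isotropic simplicial polytope that is a
local extremum of `K ↦ L_K`, `F` a facet of `P` with vertices `v 1, …, v d`, `Z` the affine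
hull of the vertices other than `v j'`, and `(ρ, θ, z)` cylindrical coordinates around `Z`
(with origin `o ∈ Z ∩ P`), oriented so that `F` has `θ = 0` and `P` has `θ ∈ (-π, 0]`. If `D`
is the probability distribution on `F` with density proportional to `ρ`, then
`E_{X ∼ D}[‖X‖²] = d + 2`. -/
theorem stmt13 {d : ℕ} (P : Set (Euc d)) (hbody : IsConvexBody P)
    (hsimp : IsSimplicialPolytope d P) (hiso : IsIsotropic P)
    (hext : IsLocalExtremumOfIsoConst P)
    (F : Set (Euc d)) (hF : IsFacetOf d P F)
    (v : Fin d → Euc d) (hvind : AffineIndependent ℝ v)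
    (hFv : F = convexHull ℝ (Set.range v))
    (j' : Fin d)
    (Z : AffineSubspace ℝ (Euc d)) (hZ : Z = affineSpan ℝ (v '' {j | j ≠ j'}))
    (o : Euc d) (ho : o ∈ (Z : Set (Euc d)) ∩ P)
    (u w : Euc d) (hu : u ∈ Z.directionᗮ) (hw : w ∈ Z.directionᗮ)
    (hun : ‖u‖ = 1) (hwn : ‖w‖ = 1) (huw : ⟪u, w⟫ = 0)
    (θ ρ : Euc d → ℝ)
    (hθ : θ = fun x => polarAngle ⟪x - o, u⟫ ⟪x - o, w⟫)
    (hρ : ρ = fun x => Real.sqrt (⟪x - o, u⟫ ^ 2 + ⟪x - o, w⟫ ^ 2))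
    (horient : ∀ x ∈ F, θ x = 0)
    (hPrange : ∀ x ∈ P, θ x ∈ Set.Ioc (-Real.pi) 0) :
    (∫ x in F, ‖x‖ ^ 2 * ρ x ∂(μH[(d - 1 : ℝ)])) /
        (∫ x in F, ρ x ∂(μH[(d - 1 : ℝ)]))
      = d + 2 := by
  obtain ⟨S, hPS⟩ := hsimp.1
  have hd : 0 < d := j'.pos
  have hdim : Module.finrank ℝ (Euc d) = d := by simp
  have hw0 : w ≠ 0 := by
    rintro rfl
    simp at hwn
  have hFcoord (x : Euc d) (hx : x ∈ F) : 0 ≤ ⟪x - o, u⟫ ∧ ⟪x - o, w⟫ = 0 := by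
    have := horient x hx
    rw [hθ] at this
    exact polarAngle_eq_zero_iff.1 this
  have hPw (x : Euc d) (hx : x ∈ P) : ⟪x - o, w⟫ ≤ 0 := by
    have := hPrange x hx
    rw [hθ] at this
    exact snd_nonpos_of_polarAngle_mem_Ioc this
  have hvF (j : Fin d) : v j ∈ F := hFv ▸ subset_convexHull ℝ _ ⟨j, rfl⟩
  have hPF : {x ∈ P | ⟪x - o, w⟫ = 0} = F := by
    ext x
    exact ⟨fun hx => hF.1.mem_of_inner_eq_zero hdim hvind j' hvF hw0
      (fun j => (hFcoord _ (hvF j)).2) hx.1 hx.2, fun hx => ⟨hF.1.subset hx, (hFcoord x hx).2⟩⟩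
  obtain ⟨q, hq⟩ := hbody.2.2
  have hqw := inner_neg_of_mem_interior hwn hPw hq
  obtain ⟨Q, hQ, hQconv, hQP, p, hp, hpw⟩ := exists_convex_extension_beyond_facet hdim hPS hvind
    hFv j' hwn hPw hPF hq hqw
  have hQF : {y : (ℝ ∙ w)ᗮ | o + (y : Euc d) ∈ Q} = {y : (ℝ ∙ w)ᗮ | o + (y : Euc d) ∈ F} := by
    ext y
    have hy : ⟪o + (y : Euc d) - o, w⟫ = 0 := by
      rw [add_sub_cancel_left]
      exact Submodule.mem_orthogonal_singleton_iff_inner_left.1 y.2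
    change _ ∈ Q ↔ _ ∈ F
    rw [← hPF, ← hQP]
    exact ⟨fun h => ⟨⟨h, hy.le⟩, hy⟩, fun h => h.1.1⟩
  set ν : Measure (ℝ ∙ w)ᗮ := μH[(d - 1 : ℝ)] with hν
  have hνHaar : ν.IsAddHaarMeasure := by
    have : Fact (Module.finrank ℝ (Euc d) = d - 1 + 1) := ⟨by rw [hdim]; omega⟩
    have hrank : ((Module.finrank ℝ (ℝ ∙ w)ᗮ : ℕ) : ℝ) = d - 1 := by
      rw [Submodule.finrank_orthogonal_span_singleton (n := d - 1) hw0, Nat.cast_sub hd,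
        Nat.cast_one]
    rw [hν, ← hrank]
    infer_instance
  obtain ⟨c, hc, hderiv⟩ := hasDerivAt_integral_inter_halfspace o u w hwn huw ν
  set K : ℝ → Set (Euc d) := fun t => {x ∈ Q | ⟪x - o, w⟫ ≤ t * ⟪x - o, u⟫} with hK
  have hK0 : K 0 = P := by simpa [hK] using hQP
  have hqQ : q ∈ interior Q := interior_mono (hQP ▸ fun x hx => hx.1) hq
  have hcrit := IsLocalExtremumOfIsoConst.first_variation_eq hd (K := K)
    (D := fun f => c * ∫ y in {y : (ℝ ∙ w)ᗮ | o + (y : Euc d) ∈ Q}, f (o + y) * ⟪(y : Euc d), u⟫ ∂ν)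
    (fun t => isCompact_inter_halfspace hQ o u w t)
    ((eventually_nonempty_interior_inter_halfspace hqQ hqw).mono fun t ht =>
      ⟨isCompact_inter_halfspace hQ o u w t, hQconv.inter_halfspace o u w t, ht⟩)
    (tendsto_hausdorffDist_inter_halfspace hQ hQconv (interior_subset hqQ) hqw)
    (hK0 ▸ hiso) (hK0 ▸ hext) fun f hf => hderiv Q hQ hQconv ⟨p, hp, hpw⟩ f hf
  have hQu (y : (ℝ ∙ w)ᗮ) (hy : o + (y : Euc d) ∈ Q) : 0 ≤ ⟪(y : Euc d), u⟫ := by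
    have : y ∈ {y : (ℝ ∙ w)ᗮ | o + (y : Euc d) ∈ F} := hQF ▸ hy
    simpa using (hFcoord _ this).1
  have hpos := integral_slice_inner_pos hQ hun huw hp hpw hQu ν
  have hSmeas : MeasurableSet {y : (ℝ ∙ w)ᗮ | o + (y : Euc d) ∈ Q} :=
    (hQ.isClosed.preimage
      (by fun_prop : Continuous fun y : (ℝ ∙ w)ᗮ => o + (y : Euc d))).measurableSet
  have hk : (0 : ℝ) ≤ d - 1 := sub_nonneg.2 (by exact_mod_cast hd)
  have hρy (y : (ℝ ∙ w)ᗮ) (hy : o + (y : Euc d) ∈ Q) : ρ (o + y) = ⟪(y : Euc d), u⟫ := by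
    have h0 : ⟪(y : Euc d), w⟫ = 0 := Submodule.mem_orthogonal_singleton_iff_inner_left.1 y.2
    rw [hρ]
    simp only [add_sub_cancel_left, h0]
    rw [zero_pow two_ne_zero, add_zero, Real.sqrt_sq (hQu y hy)]
  rw [setIntegral_hausdorffMeasure_hyperplane (fun x hx => (hFcoord x hx).2) hk,
    setIntegral_hausdorffMeasure_hyperplane (fun x hx => (hFcoord x hx).2) hk, ← hQF, ← hν,
    setIntegral_congr_fun hSmeas fun y hy => congrArg (‖o + (y : Euc d)‖ ^ 2 * ·) (hρy y hy),
    setIntegral_congr_fun hSmeas hρy, div_eq_iff hpos.ne']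
  simp only [one_mul] at hcrit
  refine mul_left_cancel₀ hc.ne' ?_
  rw [hcrit]
  ring

end
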